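/- Let θ ∈ (π/3, π), α = (π−θ)/2, and let x_θ, y_θ : [0,1] → ℝ be the coordinate functions of the generalized dragon curve 𝒟_θ (uniform limits of the piecewise-linear approximants determined by the paperfolding substitution with angle α and contraction ratio 1/(2 cos α)). Then the box-counting dimensions of the graphs X_θ = {(t, x_θ(t)) : t ∈ [0,1]} and Y_θ = {(t, y_θ(t)) : t ∈ [0,1]} both exist and equal 1 − log(cos α)/log 2. -/

import Mathlib

open Real Filter

noncomputable def dragonAngle (α : ℝ) : ℕ → ℕ → ℝ
  | 0, _ => 0
  | k+1, i => dragonAngle α k (i / 2) + (if (i / 2) % 2 = i % 2 then α else -α)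

noncomputable def fcoef (α : ℝ) (k i : ℕ) : ℝ :=
  Real.cos (dragonAngle α k i) / (2 * Real.cos α) ^ k

noncomputable def gcoef (α : ℝ) (k i : ℕ) : ℝ :=
  Real.sin (dragonAngle α k i) / (2 * Real.cos α) ^ k

noncomputable def xfun (α : ℝ) (k : ℕ) (t : ℝ) : ℝ :=
  (∑ i ∈ Finset.range (min ⌊t * 2 ^ k⌋₊ (2 ^ k - 1)), fcoef α k i) +
    2 ^ k * fcoef α k (min ⌊t * 2 ^ k⌋₊ (2 ^ k - 1)) *
      (t - (min ⌊t * 2 ^ k⌋₊ (2 ^ k - 1) : ℕ) / 2 ^ k)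

noncomputable def yfun (α : ℝ) (k : ℕ) (t : ℝ) : ℝ :=
  (∑ i ∈ Finset.range (min ⌊t * 2 ^ k⌋₊ (2 ^ k - 1)), gcoef α k i) +
    2 ^ k * gcoef α k (min ⌊t * 2 ^ k⌋₊ (2 ^ k - 1)) *
      (t - (min ⌊t * 2 ^ k⌋₊ (2 ^ k - 1) : ℕ) / 2 ^ k)

noncomputable def meshCountδ (Z : Set (ℝ × ℝ)) (δ : ℝ) : ℕ :=
  Nat.card {p : ℤ × ℤ |
    (Z ∩ (Set.Icc ((p.1 : ℝ) * δ) (((p.1 : ℝ) + 1) * δ) ×ˢ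
          Set.Icc ((p.2 : ℝ) * δ) (((p.2 : ℝ) + 1) * δ))).Nonempty}

/-!
Both coordinates are projections of the curve onto a line, and all directions `φ` are treated
alike. With `q = 1 / (2 cos α) ∈ (1/2, 1)`, a segment of level `k` has length `q ^ k` and
displacement equal to the sum of those of its two children. Hence the projected curve oscillates
by at most a constant times `q ^ k` on dyadic intervals of length `2⁻ᵏ`. Conversely, the two
children of a segment make an angle `± 2α` with each other, so they cannot both be nearly
orthogonal to `φ`: since `|sin (u - v)| ≤ |cos u| + |cos v|`, the increments of level `k` have
total variation at least a constant times `2 ^ k * q ^ k`. The first fact bounds the number of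
squares of side `2⁻ᵏ` meeting the graph from above, the second, with the intermediate value
theorem, from below, both by constant multiples of `(4 * q) ^ k`. The dimension is therefore
`log (4 * q) / log 2`.
-/

open scoped Topology

section BoxCounting

/-- The indices of the closed squares of the `δ`-mesh that meet `Z`, so that `meshCountδ Z δ` is the
cardinality of this set (and `0` when it is infinite). -/
def meshSquares (Z : Set (ℝ × ℝ)) (δ : ℝ) : Set (ℤ × ℤ) :=
  {p | (Z ∩ (Set.Icc ((p.1 : ℝ) * δ) (((p.1 : ℝ) + 1) * δ) ×ˢ
    Set.Icc ((p.2 : ℝ) * δ) (((p.2 : ℝ) + 1) * δ))).Nonempty}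

/-- The box-counting dimension of `Z` exists and equals `d`. -/
def HasBoxDim (Z : Set (ℝ × ℝ)) (d : ℝ) : Prop :=
  Tendsto (fun δ : ℝ => log (meshCountδ Z δ) / (-log δ)) (𝓝[>] 0) (𝓝 d)

/-- A `3 × 3` block of squares of the `ε`-mesh containing all those that touch the square `p` of a
finer `δ`-mesh. -/
noncomputable def coarseBlock (δ ε : ℝ) (p : ℤ × ℤ) : Finset (ℤ × ℤ) :=
  Finset.Icc (⌊p.1 * (δ / ε)⌋ - 1) (⌊p.1 * (δ / ε)⌋ + 1) ×ˢ
    Finset.Icc (⌊p.2 * (δ / ε)⌋ - 1) (⌊p.2 * (δ / ε)⌋ + 1)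

variable {Z : Set (ℝ × ℝ)} {δ ε : ℝ}

lemma meshCountδ_eq_ncard : meshCountδ Z δ = (meshSquares Z δ).ncard := rfl

lemma mem_meshSquares_iff (hδ : 0 < δ) {p : ℤ × ℤ} :
    p ∈ meshSquares Z δ ↔ ∃ z ∈ Z,
      z.1 / δ ∈ Set.Icc (p.1 : ℝ) (p.1 + 1) ∧ z.2 / δ ∈ Set.Icc (p.2 : ℝ) (p.2 + 1) := by
  simp only [meshSquares, Set.Nonempty, Set.mem_ofPred_eq, Set.mem_inter_iff, Set.mem_prod,
    Set.mem_Icc, le_div_iff₀ hδ, div_le_iff₀ hδ]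

lemma card_coarseBlock (δ ε : ℝ) (p : ℤ × ℤ) : (coarseBlock δ ε p).card = 9 := by
  have card_three (m : ℤ) : (m + 1 + 1 - (m - 1)).toNat = 3 := by omega
  simp only [coarseBlock, Finset.card_product, Int.card_Icc, card_three]

lemma mem_Icc_floor_of_div_mem_Icc (hδ : 0 < δ) (hδε : δ ≤ ε) {u : ℝ} {m n : ℤ}
    (hm : u / δ ∈ Set.Icc (m : ℝ) (m + 1)) (hn : u / ε ∈ Set.Icc (n : ℝ) (n + 1)) :
    n ∈ Finset.Icc (⌊m * (δ / ε)⌋ - 1) (⌊m * (δ / ε)⌋ + 1) := by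
  have hε : 0 < ε := hδ.trans_le hδε
  have hratio : δ / ε ≤ 1 := (div_le_one hε).2 hδε
  have hscale : u / ε = u / δ * (δ / ε) := (div_mul_div_cancel₀ hδ.ne').symm
  have hlower : m * (δ / ε) ≤ u / ε := by
    rw [hscale]; gcongr; exact hm.1
  have hupper : u / ε ≤ m * (δ / ε) + 1 := by
    calc u / ε ≤ (m + 1) * (δ / ε) := by rw [hscale]; gcongr; exact hm.2
      _ ≤ m * (δ / ε) + 1 := by linarith
  have hfloor := Int.floor_le (m * (δ / ε))
  rw [Finset.mem_Icc, ← sub_le_iff_le_add, Int.le_floor, sub_le_iff_le_add,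
    ← Int.cast_le (R := ℝ)]
  push_cast
  constructor <;> linarith [hn.1, hn.2]

lemma meshSquares_subset_biUnion_coarseBlock (hδ : 0 < δ) (hδε : δ ≤ ε)
    (hfin : (meshSquares Z δ).Finite) :
    meshSquares Z ε ⊆ hfin.toFinset.biUnion (coarseBlock δ ε) := by
  intro p hp
  obtain ⟨z, hz, hp₁, hp₂⟩ := (mem_meshSquares_iff (hδ.trans_le hδε)).1 hp
  have mem_floor_square (u : ℝ) : u ∈ Set.Icc (⌊u⌋ : ℝ) (⌊u⌋ + 1) :=
    ⟨Int.floor_le u, (Int.lt_floor_add_one u).le⟩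
  have hq : (⌊z.1 / δ⌋, ⌊z.2 / δ⌋) ∈ meshSquares Z δ :=
    (mem_meshSquares_iff hδ).2 ⟨z, hz, mem_floor_square _, mem_floor_square _⟩
  exact Finset.mem_coe.2 <| Finset.mem_biUnion.2 ⟨_, hfin.mem_toFinset.2 hq, Finset.mem_product.2
    ⟨mem_Icc_floor_of_div_mem_Icc hδ hδε (mem_floor_square _) hp₁,
      mem_Icc_floor_of_div_mem_Icc hδ hδε (mem_floor_square _) hp₂⟩⟩

lemma finite_meshSquares_of_le (hδ : 0 < δ) (hδε : δ ≤ ε) (hfin : (meshSquares Z δ).Finite) :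
    (meshSquares Z ε).Finite :=
  (Finset.finite_toSet _).subset (meshSquares_subset_biUnion_coarseBlock hδ hδε hfin)

lemma meshCountδ_le_nine_mul (hδ : 0 < δ) (hδε : δ ≤ ε) (hfin : (meshSquares Z δ).Finite) :
    meshCountδ Z ε ≤ 9 * meshCountδ Z δ := by
  calc meshCountδ Z ε ≤ (hfin.toFinset.biUnion (coarseBlock δ ε)).card := by
        rw [meshCountδ_eq_ncard, ← Set.ncard_coe_finset]
        exact Set.ncard_le_ncard (meshSquares_subset_biUnion_coarseBlock hδ hδε hfin)
          (Finset.finite_toSet _)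
    _ ≤ hfin.toFinset.card * 9 :=
        Finset.card_biUnion_le_card_mul _ _ _ fun p _ => (card_coarseBlock δ ε p).le
    _ = 9 * meshCountδ Z δ := by
        rw [meshCountδ_eq_ncard, Set.ncard_eq_toFinset_card _ hfin, mul_comm]

lemma eventually_exists_pow_inv_le_le {b : ℝ} (hb : 1 < b) {P : ℕ → Prop}
    (hP : ∀ᶠ k in atTop, P k) :
    ∀ᶠ δ in 𝓝[>] (0 : ℝ), ∃ k, P k ∧ (b ^ (k + 1))⁻¹ ≤ δ ∧ δ ≤ (b ^ k)⁻¹ := by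
  have hb0 : 0 < b := zero_lt_one.trans hb
  obtain ⟨K, hK⟩ := eventually_atTop.1 hP
  have hsmall : Set.Ioo 0 (b ^ K)⁻¹ ∈ 𝓝[>] (0 : ℝ) := Ioo_mem_nhdsGT (by positivity)
  filter_upwards [hsmall] with δ ⟨hδ, hδK⟩
  have hδ1 : δ ≤ 1 := hδK.le.trans (inv_le_one_of_one_le₀ (one_le_pow₀ hb.le))
  obtain ⟨k, hlow, hupp⟩ :=
    exists_nat_pow_near_of_lt_one hδ hδ1 (inv_pos.2 hb0) (inv_lt_one_of_one_lt₀ hb)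
  rw [inv_pow] at hlow hupp
  have hKk : K < k + 1 := by
    rw [← pow_lt_pow_iff_right₀ hb]
    exact (inv_lt_inv₀ (by positivity) (by positivity)).1 (hlow.trans hδK)
  exact ⟨k, hK k (Nat.le_of_lt_succ hKk), hlow.le, hupp⟩

lemma meshCountδ_mem_Icc_of_pow_inv_le_le {b c C r : ℝ} (hb : 0 < b) (hr : 0 < r) (hc : 0 < c)
    {k : ℕ} (hlow : ∀ j ≥ k, c * r ^ j ≤ meshCountδ Z (b ^ j)⁻¹)
    (hupp : ∀ j ≥ k, meshCountδ Z (b ^ j)⁻¹ ≤ C * r ^ j)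
    (hδ : (b ^ (k + 1))⁻¹ ≤ δ) (hδ' : δ ≤ (b ^ k)⁻¹) :
    (meshCountδ Z δ : ℝ) ∈ Set.Icc (c / 9 * r ^ k) (9 * C * r ^ (k + 1)) := by
  have hpow : 0 < (b ^ (k + 1))⁻¹ := by positivity
  have hfine : (meshSquares Z (b ^ (k + 1))⁻¹).Finite := by
    refine Nat.finite_of_card_ne_zero (Nat.cast_pos (α := ℝ).1 ?_).ne'
    exact lt_of_lt_of_le (by positivity) (hlow (k + 1) k.le_succ)
  have hfin := finite_meshSquares_of_le hpow hδ hfine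
  have hcoarse : (meshCountδ Z (b ^ k)⁻¹ : ℝ) ≤ 9 * meshCountδ Z δ := by
    exact_mod_cast meshCountδ_le_nine_mul (hpow.trans_le hδ) hδ' hfin
  have hself : (meshCountδ Z δ : ℝ) ≤ 9 * meshCountδ Z (b ^ (k + 1))⁻¹ := by
    exact_mod_cast meshCountδ_le_nine_mul hpow hδ hfine
  constructor
  · linarith [hlow k le_rfl]
  · linarith [hupp (k + 1) k.le_succ]

lemma log_sub_mul_neg_log_mem_Icc {b c C r N : ℝ} (hb : 1 < b) (hr : 1 ≤ r) (hc : 0 < c) {k : ℕ}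
    (hN : N ∈ Set.Icc (c * r ^ k) (C * r ^ (k + 1))) (hδ : (b ^ (k + 1))⁻¹ ≤ δ)
    (hδ' : δ ≤ (b ^ k)⁻¹) :
    log N - log r / log b * -log δ ∈ Set.Icc (log c - log r) (log C + log r) := by
  have : 0 < b := zero_lt_one.trans hb
  have : 0 < r := zero_lt_one.trans_le hr
  have hδ0 : 0 < δ := lt_of_lt_of_le (by positivity) hδ
  have hN0 : 0 < N := lt_of_lt_of_le (by positivity) hN.1
  have hC : 0 < C := pos_of_mul_pos_left (hN0.trans_le hN.2) (by positivity)
  have hlogb : 0 < log b := log_pos hb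
  have hd : 0 ≤ log r / log b := div_nonneg (log_nonneg hr) hlogb.le
  have hcancel : log r / log b * log b = log r := div_mul_cancel₀ _ hlogb.ne'
  have hlogN : log c + k * log r ≤ log N ∧ log N ≤ log C + (k + 1) * log r := by
    have hlow := log_le_log (by positivity) hN.1
    have hupp := log_le_log hN0 hN.2
    rw [log_mul (by positivity) (by positivity), log_pow] at hlow hupp
    exact ⟨hlow, by exact_mod_cast hupp⟩
  have hlogδ : k * log b ≤ -log δ ∧ -log δ ≤ (k + 1) * log b := by
    have hlow := log_le_log (by positivity) hδ
    have hupp := log_le_log hδ0 hδ'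
    rw [log_inv, log_pow] at hlow hupp
    push_cast at hlow
    constructor <;> linarith
  have hlow := mul_le_mul_of_nonneg_left hlogδ.1 hd
  have hupp := mul_le_mul_of_nonneg_left hlogδ.2 hd
  rw [mul_left_comm, hcancel] at hlow hupp
  constructor <;> linarith [hlogN.1, hlogN.2]

theorem hasBoxDim_of_geometric_bounds {b c C r : ℝ} (hb : 1 < b) (hr : 1 ≤ r) (hc : 0 < c)
    (hlow : ∀ᶠ k : ℕ in atTop, c * r ^ k ≤ meshCountδ Z (b ^ k)⁻¹)
    (hupp : ∀ᶠ k : ℕ in atTop, meshCountδ Z (b ^ k)⁻¹ ≤ C * r ^ k) :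
    HasBoxDim Z (log r / log b) := by
  have hlog : Tendsto (fun δ => -log δ) (𝓝[>] 0) atTop :=
    tendsto_neg_atBot_atTop.comp tendsto_log_nhdsGT_zero
  have hbdd : ∀ᶠ δ in 𝓝[>] (0 : ℝ), log (meshCountδ Z δ) - log r / log b * -log δ ∈
      Set.Icc (log (c / 9) - log r) (log (9 * C) + log r) := by
    have htail := eventually_forall_ge_atTop.2 hlow |>.and (eventually_forall_ge_atTop.2 hupp)
    filter_upwards [eventually_exists_pow_inv_le_le hb htail]
      with δ ⟨k, ⟨hlow, hupp⟩, hδ, hδ'⟩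
    exact log_sub_mul_neg_log_mem_Icc hb hr (by positivity)
      (meshCountδ_mem_Icc_of_pow_inv_le_le (by linarith) (by linarith) hc hlow hupp hδ hδ') hδ hδ'
  have herror := tendsto_bdd_div_atTop_nhds_zero (hbdd.mono fun _ h => h.1)
    (hbdd.mono fun _ h => h.2) hlog
  have hmain := herror.add_const (log r / log b)
  rw [zero_add] at hmain
  refine hmain.congr' ?_
  filter_upwards [hlog.eventually_gt_atTop 0] with δ hδ
  rw [sub_div, mul_div_cancel_right₀ _ hδ.ne', sub_add_cancel]

end BoxCounting

section Graph

/-- The graph over `[0, 1]` of a real function, spelled out instead of using `Set.graphOn` so that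
it unfolds to the sets occurring in `stmt17`. -/
def unitGraph (x : ℝ → ℝ) : Set (ℝ × ℝ) := {p | p.1 ∈ Set.Icc (0 : ℝ) 1 ∧ p.2 = x p.1}

variable {x : ℝ → ℝ}

lemma mem_meshSquares_unitGraph_iff {n : ℕ} (hn : 0 < n) {p : ℤ × ℤ} :
    p ∈ meshSquares (unitGraph x) (n : ℝ)⁻¹ ↔ ∃ t ∈ Set.Icc (0 : ℝ) 1,
      t * n ∈ Set.Icc (p.1 : ℝ) (p.1 + 1) ∧ x t * n ∈ Set.Icc (p.2 : ℝ) (p.2 + 1) := by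
  rw [mem_meshSquares_iff (by positivity)]
  simp only [div_inv_eq_mul]
  constructor
  · rintro ⟨⟨t, y⟩, ⟨ht, hy : y = x t⟩, hp⟩
    exact ⟨t, ht, hy ▸ hp⟩
  · rintro ⟨t, ht, hp⟩
    exact ⟨(t, x t), ⟨ht, rfl⟩, hp⟩

lemma card_Icc_ceil_floor_le {a b : ℝ} (hab : a ≤ b + 1) :
    ((Finset.Icc ⌈a⌉ ⌊b⌋).card : ℝ) ≤ b - a + 1 := by
  have hcard : ((Finset.Icc ⌈a⌉ ⌊b⌋).card : ℤ) = max (⌊b⌋ + 1 - ⌈a⌉) 0 := by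
    rw [Int.card_Icc, Int.ofNat_toNat]
  calc ((Finset.Icc ⌈a⌉ ⌊b⌋).card : ℝ) = max (⌊b⌋ + 1 - ⌈a⌉ : ℝ) 0 := by exact_mod_cast hcard
    _ ≤ b - a + 1 := max_le (by linarith [Int.floor_le b, Int.le_ceil a]) (by linarith)

lemma sub_one_le_card_Icc_ceil_floor (a b : ℝ) :
    b - a - 1 ≤ ((Finset.Icc ⌈a⌉ ⌊b⌋).card : ℝ) := by
  have hcard : ⌊b⌋ + 1 - ⌈a⌉ ≤ ((Finset.Icc ⌈a⌉ ⌊b⌋).card : ℤ) := by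
    rw [Int.card_Icc]; exact Int.self_le_toNat _
  have hcard' : (⌊b⌋ + 1 - ⌈a⌉ : ℝ) ≤ (Finset.Icc ⌈a⌉ ⌊b⌋).card := by exact_mod_cast hcard
  linarith [Int.lt_floor_add_one b, Int.ceil_lt_add_one a]

/-- The squares of the `1 / n`-mesh that the graph of `x` can meet near abscissa `i / n` if `x`
varies by at most `η` there. -/
noncomputable def oscBlock (x : ℝ → ℝ) (n : ℕ) (η : ℝ) (i : ℕ) : Finset (ℤ × ℤ) :=
  Finset.Icc (i - 1 : ℤ) i ×ˢ
    Finset.Icc ⌈x (i / n) * n - η * n - 1⌉ ⌊x (i / n) * n + η * n⌋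

lemma card_oscBlock_le {n : ℕ} {η : ℝ} (hη : 0 ≤ η) (i : ℕ) :
    ((oscBlock x n η i).card : ℝ) ≤ 4 * (n * η + 1) := by
  have hcol : (Finset.Icc (i - 1 : ℤ) i).card = 2 := by
    rw [Int.card_Icc]; omega
  have hηn : 0 ≤ η * n := by positivity
  have hrow := card_Icc_ceil_floor_le (a := x (i / n) * n - η * n - 1)
    (b := x (i / n) * n + η * n) (by linarith)
  rw [oscBlock, Finset.card_product, hcol]
  push_cast
  linarith

lemma meshSquares_unitGraph_subset_biUnion_oscBlock {n : ℕ} (hn : 0 < n) {η : ℝ}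
    (hosc : ∀ s ∈ Set.Icc (0 : ℝ) 1, ∀ t ∈ Set.Icc (0 : ℝ) 1,
      |s - t| ≤ (n : ℝ)⁻¹ → |x s - x t| ≤ η) :
    meshSquares (unitGraph x) (n : ℝ)⁻¹ ⊆ (Finset.range (n + 1)).biUnion (oscBlock x n η) := by
  intro p hp
  obtain ⟨t, ht, ⟨hp₁, hp₁'⟩, hp₂, hp₂'⟩ := (mem_meshSquares_unitGraph_iff hn).1 hp
  have hn0 : (0 : ℝ) < n := by positivity
  have htn : t * n ≤ n := mul_le_of_le_one_left hn0.le ht.2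
  set i := ⌊t * n⌋₊
  have hi : (i : ℝ) ≤ t * n := Nat.floor_le (mul_nonneg ht.1 hn0.le)
  have hi' : t * n < i + 1 := Nat.lt_floor_add_one _
  have hin : i ≤ n := by exact_mod_cast hi.trans htn
  have hnode : (i / n : ℝ) ∈ Set.Icc (0 : ℝ) 1 :=
    ⟨by positivity, (div_le_one hn0).2 (by exact_mod_cast hin)⟩
  have hclose : |(i / n : ℝ) - t| ≤ (n : ℝ)⁻¹ := by
    have hle : (i / n : ℝ) ≤ t := (div_le_iff₀ hn0).2 hi
    have hlt : t ≤ i / n + (n : ℝ)⁻¹ := by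
      rw [← one_div, ← add_div, le_div_iff₀ hn0]; exact hi'.le
    rw [abs_le]
    constructor <;> linarith
  have hvalue : |x (i / n) * n - x t * n| ≤ η * n := by
    rw [← sub_mul, abs_mul, abs_of_pos hn0]
    exact mul_le_mul_of_nonneg_right (hosc _ hnode t ht hclose) hn0.le
  rw [abs_le] at hvalue
  refine Finset.mem_coe.2 (Finset.mem_biUnion.2 ⟨i, Finset.mem_range_succ_iff.2 hin, ?_⟩)
  have hcol : (p.1 : ℝ) < i + 1 ∧ (i : ℝ) ≤ p.1 + 1 := ⟨by linarith, by linarith⟩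
  have hcol' : p.1 < i + 1 ∧ (i : ℤ) ≤ p.1 + 1 := by exact_mod_cast hcol
  simp only [oscBlock, Finset.mem_product, Finset.mem_Icc, Int.ceil_le, Int.le_floor]
  exact ⟨⟨by omega, by omega⟩, by linarith, by linarith⟩

lemma finite_meshSquares_unitGraph {n : ℕ} (hn : 0 < n) {η : ℝ}
    (hosc : ∀ s ∈ Set.Icc (0 : ℝ) 1, ∀ t ∈ Set.Icc (0 : ℝ) 1,
      |s - t| ≤ (n : ℝ)⁻¹ → |x s - x t| ≤ η) :
    (meshSquares (unitGraph x) (n : ℝ)⁻¹).Finite :=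
  (Finset.finite_toSet _).subset (meshSquares_unitGraph_subset_biUnion_oscBlock hn hosc)

lemma meshCountδ_unitGraph_le {n : ℕ} (hn : 0 < n) {η : ℝ}
    (hosc : ∀ s ∈ Set.Icc (0 : ℝ) 1, ∀ t ∈ Set.Icc (0 : ℝ) 1,
      |s - t| ≤ (n : ℝ)⁻¹ → |x s - x t| ≤ η) :
    (meshCountδ (unitGraph x) (n : ℝ)⁻¹ : ℝ) ≤ 8 * n * (n * η + 1) := by
  have hη : 0 ≤ η := by
    simpa using hosc 0 (by simp) 0 (by simp) (by simp)
  have hcard : meshCountδ (unitGraph x) (n : ℝ)⁻¹ ≤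
      ∑ i ∈ Finset.range (n + 1), (oscBlock x n η i).card := by
    refine le_trans ?_ Finset.card_biUnion_le
    rw [meshCountδ_eq_ncard, ← Set.ncard_coe_finset]
    exact Set.ncard_le_ncard (meshSquares_unitGraph_subset_biUnion_oscBlock hn hosc)
      (Finset.finite_toSet _)
  calc (meshCountδ (unitGraph x) (n : ℝ)⁻¹ : ℝ)
      ≤ ∑ i ∈ Finset.range (n + 1), ((oscBlock x n η i).card : ℝ) := by exact_mod_cast hcard
    _ ≤ ∑ _i ∈ Finset.range (n + 1), 4 * (n * η + 1) :=
        Finset.sum_le_sum fun i _ => card_oscBlock_le hη i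
    _ = (n + 1) * (4 * (n * η + 1)) := by simp
    _ ≤ (2 * n) * (4 * (n * η + 1)) := by
        have : (1 : ℝ) ≤ n := by exact_mod_cast hn
        gcongr
        linarith
    _ = 8 * n * (n * η + 1) := by ring

/-- The rows `m` of the `1 / n`-mesh whose lower edge lies between the heights of the graph of `x`
at the two ends of its `i`-th column. -/
noncomputable def crossedRows (x : ℝ → ℝ) (n i : ℕ) : Finset ℤ :=
  Finset.Icc ⌈min (x (i / n)) (x ((i + 1 : ℕ) / n)) * n⌉
    ⌊max (x (i / n)) (x ((i + 1 : ℕ) / n)) * n⌋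

lemma abs_sub_mul_sub_one_le_card_crossedRows (x : ℝ → ℝ) (n i : ℕ) :
    |x ((i + 1 : ℕ) / n) - x (i / n)| * n - 1 ≤ (crossedRows x n i).card := by
  rw [← max_sub_min_eq_abs, sub_mul]
  exact sub_one_le_card_Icc_ceil_floor _ _

lemma mem_meshSquares_of_mem_crossedRows (hx : ContinuousOn x (Set.Icc 0 1)) {n i : ℕ}
    (hi : i < n) {m : ℤ} (hm : m ∈ crossedRows x n i) :
    ((i : ℤ), m) ∈ meshSquares (unitGraph x) (n : ℝ)⁻¹ := by
  have hn : 0 < n := i.zero_le.trans_lt hi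
  have hn0 : (0 : ℝ) < n := by positivity
  have hle : (i / n : ℝ) ≤ (i + 1 : ℕ) / n := by gcongr; exact i.le_succ
  have hcol : Set.Icc (i / n : ℝ) ((i + 1 : ℕ) / n) ⊆ Set.Icc 0 1 :=
    Set.Icc_subset_Icc (by positivity) ((div_le_one hn0).2 (by exact_mod_cast hi))
  have hivt := intermediate_value_uIcc (f := x) (a := (i / n : ℝ)) (b := (i + 1 : ℕ) / n)
    (by rw [Set.uIcc_of_le hle]; exact hx.mono hcol)
  simp only [crossedRows, Finset.mem_Icc, Int.ceil_le, Int.le_floor] at hm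
  obtain ⟨t, ht, hxt⟩ := hivt ⟨(le_div_iff₀ hn0).2 hm.1, (div_le_iff₀ hn0).2 hm.2⟩
  rw [Set.uIcc_of_le hle] at ht
  have hlow := (div_le_iff₀ hn0).1 ht.1
  have hupp := (le_div_iff₀ hn0).1 ht.2
  have hvalue : x t * n = m := by rw [hxt, div_mul_cancel₀ _ hn0.ne']
  push_cast at hupp
  exact (mem_meshSquares_unitGraph_iff hn).2
    ⟨t, hcol ht, ⟨hlow, hupp⟩, hvalue.ge, by linarith⟩

lemma sum_abs_sub_mul_sub_le_meshCountδ (hx : ContinuousOn x (Set.Icc 0 1)) (n : ℕ)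
    (hfin : (meshSquares (unitGraph x) (n : ℝ)⁻¹).Finite) :
    (∑ i ∈ Finset.range n, |x ((i + 1 : ℕ) / n) - x (i / n)|) * n - n ≤
      meshCountδ (unitGraph x) (n : ℝ)⁻¹ := by
  set T : Finset (Σ _ : ℕ, ℤ) := (Finset.range n).sigma (crossedRows x n)
  have hcard : T.card ≤ meshCountδ (unitGraph x) (n : ℝ)⁻¹ := by
    rw [meshCountδ_eq_ncard, Set.ncard_eq_toFinset_card _ hfin]
    refine Finset.card_le_card_of_injOn (fun p => ((p.1 : ℤ), p.2)) ?_ ?_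
    · rintro ⟨i, m⟩ hp
      obtain ⟨hi, hm⟩ := Finset.mem_sigma.1 (Finset.mem_coe.1 hp)
      exact Finset.mem_coe.2 <| hfin.mem_toFinset.2 <|
        mem_meshSquares_of_mem_crossedRows hx (Finset.mem_range.1 hi) hm
    · rintro ⟨i, m⟩ _ ⟨j, l⟩ _ hij
      simp only [Prod.mk.injEq, Int.natCast_inj] at hij
      rw [hij.1, hij.2]
  calc (∑ i ∈ Finset.range n, |x ((i + 1 : ℕ) / n) - x (i / n)|) * n - n
      = ∑ i ∈ Finset.range n, (|x ((i + 1 : ℕ) / n) - x (i / n)| * n - 1) := by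
        simp [Finset.sum_mul]
    _ ≤ ∑ i ∈ Finset.range n, ((crossedRows x n i).card : ℝ) :=
        Finset.sum_le_sum fun i _ => abs_sub_mul_sub_one_le_card_crossedRows x n i
    _ = T.card := by rw [Finset.card_sigma, Nat.cast_sum]
    _ ≤ meshCountδ (unitGraph x) (n : ℝ)⁻¹ := by exact_mod_cast hcard

variable {b : ℕ} {c C q : ℝ}

lemma continuousOn_of_geometric_modulus (hb : 0 < b) (hq : 0 ≤ q) (hq1 : q < 1)
    (hosc : ∀ k : ℕ, ∀ s ∈ Set.Icc (0 : ℝ) 1, ∀ t ∈ Set.Icc (0 : ℝ) 1,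
      |s - t| ≤ ((b : ℝ) ^ k)⁻¹ → |x s - x t| ≤ C * q ^ k) :
    ContinuousOn x (Set.Icc 0 1) := by
  have hlim : Tendsto (fun k : ℕ => C * q ^ k) atTop (𝓝 0) := by
    simpa using (tendsto_pow_atTop_nhds_zero_of_lt_one hq hq1).const_mul C
  rw [Metric.continuousOn_iff]
  intro t ht ε hε
  obtain ⟨k, hk⟩ := (hlim.eventually_lt_const hε).exists
  exact ⟨((b : ℝ) ^ k)⁻¹, by positivity, fun s hs hst => (hosc k s hs t ht hst.le).trans_lt hk⟩

theorem hasBoxDim_unitGraph_of_modulus_of_variation (hb : 1 < b) (hq : 1 < b * q) (hq1 : q < 1)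
    (hc : 0 < c)
    (hosc : ∀ k : ℕ, ∀ s ∈ Set.Icc (0 : ℝ) 1, ∀ t ∈ Set.Icc (0 : ℝ) 1,
      |s - t| ≤ ((b : ℝ) ^ k)⁻¹ → |x s - x t| ≤ C * q ^ k)
    (hvar : ∀ᶠ k : ℕ in atTop, c * (b * q) ^ k ≤
      ∑ i ∈ Finset.range (b ^ k),
        |x ((i + 1 : ℕ) / (b : ℝ) ^ k) - x (i / (b : ℝ) ^ k)|) :
    HasBoxDim (unitGraph x) (log (b ^ 2 * q) / log b) := by
  have hb1 : (1 : ℝ) < b := by exact_mod_cast hb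
  have hbpos : 0 < b := zero_lt_one.trans hb
  have hq0 : 0 < q := pos_of_mul_pos_right (zero_lt_one.trans hq) (by positivity)
  have hratio (k : ℕ) : ((b : ℝ) ^ 2 * q) ^ k = b ^ k * (b * q) ^ k := by
    rw [← mul_pow]; ring
  have hosc' (k : ℕ) : ∀ s ∈ Set.Icc (0 : ℝ) 1, ∀ t ∈ Set.Icc (0 : ℝ) 1,
      |s - t| ≤ ((b ^ k : ℕ) : ℝ)⁻¹ → |x s - x t| ≤ C * q ^ k := by
    simpa only [Nat.cast_pow] using hosc k
  have hlarge : ∀ᶠ k : ℕ in atTop, 2 / c ≤ (b * q) ^ k :=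
    (tendsto_pow_atTop_atTop_of_one_lt hq).eventually_ge_atTop _
  refine hasBoxDim_of_geometric_bounds (c := c / 2) (C := 8 * (C + 1)) hb1 (by nlinarith)
    (by positivity) ?_ (Eventually.of_forall fun k => ?_)
  · filter_upwards [hvar, hlarge] with k hk hk'
    have hcount := sum_abs_sub_mul_sub_le_meshCountδ
      (continuousOn_of_geometric_modulus hbpos hq0.le hq1 hosc) (b ^ k)
      (finite_meshSquares_unitGraph (by positivity) (hosc' k))
    have hhalf : 1 ≤ c / 2 * (b * q) ^ k := by
      rw [div_le_iff₀ hc] at hk'; linarith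
    rw [Nat.cast_pow] at hcount
    calc c / 2 * (b ^ 2 * q) ^ k = c / 2 * (b * q) ^ k * b ^ k := by rw [hratio]; ring
      _ ≤ (c * (b * q) ^ k - 1) * b ^ k := by gcongr; linarith
      _ = c * (b * q) ^ k * b ^ k - b ^ k := by ring
      _ ≤ meshCountδ (unitGraph x) ((b : ℝ) ^ k)⁻¹ := by
        refine le_trans ?_ hcount
        gcongr
  · have hcount := meshCountδ_unitGraph_le (by positivity) (hosc' k)
    have hgrowth : 1 ≤ (b * q) ^ k := one_le_pow₀ hq.le
    rw [Nat.cast_pow] at hcount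
    calc (meshCountδ (unitGraph x) ((b : ℝ) ^ k)⁻¹ : ℝ)
        ≤ 8 * b ^ k * (b ^ k * (C * q ^ k) + 1) := hcount
      _ = 8 * b ^ k * (C * (b * q) ^ k + 1) := by rw [mul_pow]; ring
      _ ≤ 8 * b ^ k * (C * (b * q) ^ k + (b * q) ^ k) := by gcongr
      _ = 8 * (C + 1) * (b ^ 2 * q) ^ k := by rw [hratio]; ring

end Graph

section Dyadic

/-- A family of increments on the dyadic intervals, `a k i` belonging to the `i`-th interval of
length `2⁻ᵏ`, is additive if each increment is the sum of those on the two halves of its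
interval. -/
def IsDyadicAdditive (a : ℕ → ℕ → ℝ) : Prop :=
  ∀ k i, a (k + 1) (2 * i) + a (k + 1) (2 * i + 1) = a k i

/-- The sum of the first `j` increments of level `k`. -/
def dyadicSum (a : ℕ → ℕ → ℝ) (k j : ℕ) : ℝ := ∑ i ∈ Finset.range j, a k i

/-- The piecewise linear function on `[0, 1]` vanishing at `0` whose increments on the dyadic
intervals of length `2⁻ᵏ` are `a k`. The minimum makes the last interval contain `t = 1`. -/
noncomputable def dyadicApprox (a : ℕ → ℕ → ℝ) (k : ℕ) (t : ℝ) : ℝ :=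
  dyadicSum a k (min ⌊t * 2 ^ k⌋₊ (2 ^ k - 1)) +
    2 ^ k * a k (min ⌊t * 2 ^ k⌋₊ (2 ^ k - 1)) *
      (t - (min ⌊t * 2 ^ k⌋₊ (2 ^ k - 1) : ℕ) / 2 ^ k)

variable {a : ℕ → ℕ → ℝ} {q : ℝ} {x : ℝ → ℝ}

lemma dyadicSum_succ (a : ℕ → ℕ → ℝ) (k j : ℕ) :
    dyadicSum a k (j + 1) = dyadicSum a k j + a k j :=
  Finset.sum_range_succ _ _

lemma IsDyadicAdditive.dyadicSum_two_mul (ha : IsDyadicAdditive a) (k j : ℕ) :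
    dyadicSum a (k + 1) (2 * j) = dyadicSum a k j := by
  induction j with
  | zero => rfl
  | succ j ih =>
    rw [mul_add_one, dyadicSum_succ, dyadicSum_succ, dyadicSum_succ, ih, add_assoc, ha k j]

lemma IsDyadicAdditive.dyadicSum_mul_two_pow (ha : IsDyadicAdditive a) (k m j : ℕ) :
    dyadicSum a (k + m) (j * 2 ^ m) = dyadicSum a k j := by
  induction m with
  | zero => rw [add_zero, pow_zero, mul_one]
  | succ m ih => rw [← add_assoc, pow_succ', mul_left_comm, ha.dyadicSum_two_mul, ih]

lemma abs_dyadicSum_sub_le (hq : 0 ≤ q) (haq : ∀ k i, |a k i| ≤ q ^ k) {k i j : ℕ}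
    (hij : i ≤ j) (hji : j ≤ i + 1) : |dyadicSum a k j - dyadicSum a k i| ≤ q ^ k := by
  obtain rfl | rfl : j = i ∨ j = i + 1 := by omega
  · simpa only [sub_self, abs_zero] using pow_nonneg hq k
  · simpa only [dyadicSum_succ, add_sub_cancel_left] using haq k i

lemma abs_dyadicSum_sub_dyadicApprox_le (hq : 0 ≤ q) (haq : ∀ k i, |a k i| ≤ q ^ k) (k : ℕ)
    {t : ℝ} (ht : t ∈ Set.Icc (0 : ℝ) 1) :
    |dyadicSum a k ⌊t * 2 ^ k⌋₊ - dyadicApprox a k t| ≤ 2 * q ^ k := by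
  have hpow : (0 : ℝ) < 2 ^ k := by positivity
  have htpow : t * 2 ^ k ≤ 2 ^ k := mul_le_of_le_one_left hpow.le ht.2
  unfold dyadicApprox
  set j := ⌊t * 2 ^ k⌋₊
  set m := min j (2 ^ k - 1)
  have hj : (j : ℝ) ≤ t * 2 ^ k := Nat.floor_le (mul_nonneg ht.1 hpow.le)
  have hj' : t * 2 ^ k < j + 1 := Nat.lt_floor_add_one _
  have hjpow : j ≤ 2 ^ k := by exact_mod_cast hj.trans htpow
  have hmj : m ≤ j := min_le_left _ _
  have hjm : j ≤ m + 1 := by omega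
  have hfrac : |t * 2 ^ k - m| ≤ 1 := by
    have hm : (m : ℝ) ≤ j := by exact_mod_cast hmj
    have hm' : t * 2 ^ k ≤ m + 1 := by
      obtain hmin | hlast : m = j ∨ m + 1 = 2 ^ k := by
        have := Nat.two_pow_pos k
        omega
      · rw [hmin]; exact hj'.le
      · exact htpow.trans (by exact_mod_cast hlast.ge)
    rw [abs_le]
    constructor <;> linarith
  have hlinear : |2 ^ k * a k m * (t - m / 2 ^ k)| ≤ q ^ k := by
    calc |2 ^ k * a k m * (t - m / 2 ^ k)| = |a k m| * |t * 2 ^ k - m| := by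
          rw [← abs_mul]; congr 1; field_simp
      _ ≤ q ^ k * 1 := by gcongr; exact haq k m
      _ = q ^ k := mul_one _
  calc |dyadicSum a k j - (dyadicSum a k m + 2 ^ k * a k m * (t - m / 2 ^ k))|
      ≤ |dyadicSum a k j - dyadicSum a k m| + |2 ^ k * a k m * (t - m / 2 ^ k)| := by
        rw [← sub_sub]; exact abs_sub _ _
    _ ≤ q ^ k + q ^ k := add_le_add (abs_dyadicSum_sub_le hq haq hmj hjm) hlinear
    _ = 2 * q ^ k := (two_mul _).symm

lemma tendsto_dyadicSum_floor (hq : 0 ≤ q) (hq1 : q < 1) (haq : ∀ k i, |a k i| ≤ q ^ k) {t : ℝ}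
    (ht : t ∈ Set.Icc (0 : ℝ) 1) (hx : Tendsto (fun k => dyadicApprox a k t) atTop (𝓝 (x t))) :
    Tendsto (fun k => dyadicSum a k ⌊t * 2 ^ k⌋₊) atTop (𝓝 (x t)) := by
  have hdiff : Tendsto (fun k => dyadicSum a k ⌊t * 2 ^ k⌋₊ - dyadicApprox a k t) atTop (𝓝 0) :=
    squeeze_zero_norm (fun k => abs_dyadicSum_sub_dyadicApprox_le hq haq k ht)
      (by simpa using (tendsto_pow_atTop_nhds_zero_of_lt_one hq hq1).const_mul 2)
  simpa using hdiff.add hx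

lemma IsDyadicAdditive.dist_dyadicSum_floor_succ_le (ha : IsDyadicAdditive a) (hq : 0 ≤ q)
    (hq1 : q ≤ 1) (haq : ∀ k i, |a k i| ≤ q ^ k) (t : ℝ) (k : ℕ) :
    dist (dyadicSum a k ⌊t * 2 ^ k⌋₊) (dyadicSum a (k + 1) ⌊t * 2 ^ (k + 1)⌋₊) ≤ 1 * q ^ k := by
  have hfloor : ⌊t * 2 ^ k⌋₊ = ⌊t * 2 ^ (k + 1)⌋₊ / 2 := by
    rw [← Nat.floor_div_ofNat, pow_succ, ← mul_assoc, mul_div_cancel_right₀ _ two_ne_zero]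
  rw [hfloor, ← ha.dyadicSum_two_mul, dist_comm, dist_eq, one_mul]
  exact (abs_dyadicSum_sub_le hq haq (by omega) (by omega)).trans
    (pow_le_pow_of_le_one hq hq1 k.le_succ)

lemma IsDyadicAdditive.abs_limit_sub_le (ha : IsDyadicAdditive a) (hq : 0 ≤ q) (hq1 : q < 1)
    (haq : ∀ k i, |a k i| ≤ q ^ k)
    (hx : ∀ t ∈ Set.Icc (0 : ℝ) 1, Tendsto (fun k => dyadicApprox a k t) atTop (𝓝 (x t)))
    (k : ℕ) (s : ℝ) (hs : s ∈ Set.Icc (0 : ℝ) 1) (t : ℝ) (ht : t ∈ Set.Icc (0 : ℝ) 1)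
    (hst : |s - t| ≤ (2 ^ k)⁻¹) : |x s - x t| ≤ (2 / (1 - q) + 1) * q ^ k := by
  wlog hle : s ≤ t generalizing s t
  · rw [abs_sub_comm]
    exact this t ht s hs (by rwa [abs_sub_comm]) (le_of_not_ge hle)
  have htail (u : ℝ) (hu : u ∈ Set.Icc (0 : ℝ) 1) :
      |dyadicSum a k ⌊u * 2 ^ k⌋₊ - x u| ≤ 1 * q ^ k / (1 - q) :=
    dist_le_of_le_geometric_of_tendsto q 1 hq1 (ha.dist_dyadicSum_floor_succ_le hq hq1.le haq u)
      (tendsto_dyadicSum_floor hq hq1 haq hu (hx u hu)) k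
  have hsum : |dyadicSum a k ⌊t * 2 ^ k⌋₊ - dyadicSum a k ⌊s * 2 ^ k⌋₊| ≤ q ^ k := by
    have hpow : (0 : ℝ) < 2 ^ k := by positivity
    have hnext : t * 2 ^ k ≤ s * 2 ^ k + 1 := by
      calc t * 2 ^ k ≤ (s + (2 ^ k)⁻¹) * 2 ^ k := by gcongr; linarith [(abs_le.1 hst).1]
        _ = s * 2 ^ k + 1 := by rw [add_mul, inv_mul_cancel₀ hpow.ne']
    refine abs_dyadicSum_sub_le hq haq (Nat.floor_le_floor (by gcongr)) ?_
    rw [← Nat.floor_add_one (mul_nonneg hs.1 hpow.le)]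
    exact Nat.floor_le_floor hnext
  have htail_s := abs_le.1 (htail s hs)
  have htail_t := abs_le.1 (htail t ht)
  have hsplit : (2 / (1 - q) + 1) * q ^ k = 1 * q ^ k / (1 - q) + 1 * q ^ k / (1 - q) + q ^ k := by
    ring
  rw [abs_le] at hsum ⊢
  constructor <;> linarith [hsum.1, hsum.2]

lemma IsDyadicAdditive.limit_div_two_pow (ha : IsDyadicAdditive a) (hq : 0 ≤ q) (hq1 : q < 1)
    (haq : ∀ k i, |a k i| ≤ q ^ k)
    (hx : ∀ t ∈ Set.Icc (0 : ℝ) 1, Tendsto (fun k => dyadicApprox a k t) atTop (𝓝 (x t)))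
    {k j : ℕ} (hj : j ≤ 2 ^ k) : x (j / 2 ^ k) = dyadicSum a k j := by
  have ht : (j / 2 ^ k : ℝ) ∈ Set.Icc (0 : ℝ) 1 :=
    ⟨by positivity, (div_le_one (by positivity)).2 (by exact_mod_cast hj)⟩
  refine tendsto_nhds_unique (tendsto_dyadicSum_floor hq hq1 haq ht (hx _ ht))
    (tendsto_const_nhds.congr' ?_)
  filter_upwards [eventually_ge_atTop k] with n hn
  obtain ⟨m, rfl⟩ := Nat.exists_eq_add_of_le hn
  have hnode : (j / 2 ^ k : ℝ) * 2 ^ (k + m) = (j * 2 ^ m : ℕ) := by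
    rw [pow_add, ← mul_assoc, div_mul_cancel₀ _ (by positivity)]
    push_cast
    rfl
  rw [hnode, Nat.floor_natCast, ha.dyadicSum_mul_two_pow]

lemma mul_le_sum_range_two_mul {f : ℕ → ℝ} {c : ℝ} (h : ∀ i, c ≤ f (2 * i) + f (2 * i + 1))
    (n : ℕ) : n * c ≤ ∑ i ∈ Finset.range (2 * n), f i := by
  induction n with
  | zero => simp
  | succ n ih =>
    rw [mul_add_one, Finset.sum_range_succ, Finset.sum_range_succ, Nat.cast_succ]
    linarith [h n]

lemma IsDyadicAdditive.le_sum_abs_limit_sub {c : ℝ} (ha : IsDyadicAdditive a) (hq : 0 ≤ q)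
    (hq1 : q < 1) (haq : ∀ k i, |a k i| ≤ q ^ k)
    (hac : ∀ k i, c * q ^ (k + 1) ≤ |a (k + 1) (2 * i)| + |a (k + 1) (2 * i + 1)|)
    (hx : ∀ t ∈ Set.Icc (0 : ℝ) 1, Tendsto (fun k => dyadicApprox a k t) atTop (𝓝 (x t)))
    (k : ℕ) : c / 2 * (2 * q) ^ (k + 1) ≤ ∑ i ∈ Finset.range (2 ^ (k + 1)),
      |x ((i + 1 : ℕ) / 2 ^ (k + 1)) - x (i / 2 ^ (k + 1))| := by
  have hincr : ∀ i ∈ Finset.range (2 ^ (k + 1)),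
      |x ((i + 1 : ℕ) / 2 ^ (k + 1)) - x (i / 2 ^ (k + 1))| = |a (k + 1) i| := by
    intro i hi
    rw [Finset.mem_range] at hi
    rw [ha.limit_div_two_pow hq hq1 haq hx hi, ha.limit_div_two_pow hq hq1 haq hx hi.le,
      dyadicSum_succ, add_sub_cancel_left]
  calc c / 2 * (2 * q) ^ (k + 1) = (2 ^ k : ℕ) * (c * q ^ (k + 1)) := by
        rw [mul_pow, pow_succ 2]; push_cast; ring
    _ ≤ ∑ i ∈ Finset.range (2 * 2 ^ k), |a (k + 1) i| :=
        mul_le_sum_range_two_mul (f := fun i => |a (k + 1) i|) (hac k) (2 ^ k)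
    _ = _ := by rw [Finset.sum_congr rfl hincr, pow_succ']

theorem IsDyadicAdditive.hasBoxDim_unitGraph {c : ℝ} (ha : IsDyadicAdditive a) (hq : 1 / 2 < q)
    (hq1 : q < 1) (hc : 0 < c) (haq : ∀ k i, |a k i| ≤ q ^ k)
    (hac : ∀ k i, c * q ^ (k + 1) ≤ |a (k + 1) (2 * i)| + |a (k + 1) (2 * i + 1)|)
    (hx : ∀ t ∈ Set.Icc (0 : ℝ) 1, Tendsto (fun k => dyadicApprox a k t) atTop (𝓝 (x t))) :
    HasBoxDim (unitGraph x) (log (4 * q) / log 2) := by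
  have hq0 : 0 ≤ q := by linarith
  have hvar : ∀ᶠ k : ℕ in atTop, c / 2 * (2 * q) ^ k ≤
      ∑ i ∈ Finset.range (2 ^ k), |x ((i + 1 : ℕ) / 2 ^ k) - x (i / 2 ^ k)| := by
    filter_upwards [eventually_ge_atTop 1] with k hk
    obtain ⟨k, rfl⟩ := Nat.exists_eq_add_of_le' hk
    exact ha.le_sum_abs_limit_sub hq0 hq1 haq hac hx k
  have hdim := hasBoxDim_unitGraph_of_modulus_of_variation
    (b := 2) (c := c / 2) (C := 2 / (1 - q) + 1) (q := q) (x := x)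
    one_lt_two (by push_cast; linarith) hq1 (by positivity)
    (by simpa only [Nat.cast_ofNat] using ha.abs_limit_sub_le hq0 hq1 haq hx)
    (by simpa only [Nat.cast_ofNat] using hvar)
  have hfour : ((2 : ℕ) : ℝ) ^ 2 = 4 := by norm_num
  rwa [hfour, Nat.cast_ofNat] at hdim

end Dyadic

section Dragon

/-- The displacement along the direction of angle `φ` of the `i`-th segment of the level `k`
approximant of the dragon curve. -/
noncomputable def dirCoef (α φ : ℝ) (k i : ℕ) : ℝ :=
  cos (dragonAngle α k i - φ) / (2 * cos α) ^ k

lemma xfun_eq_dyadicApprox (α : ℝ) : xfun α = dyadicApprox (dirCoef α 0) := by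
  have hcoef : fcoef α = dirCoef α 0 := by
    funext k i; rw [fcoef, dirCoef, sub_zero]
  rw [← hcoef]
  rfl

lemma yfun_eq_dyadicApprox (α : ℝ) : yfun α = dyadicApprox (dirCoef α (π / 2)) := by
  have hcoef : gcoef α = dirCoef α (π / 2) := by
    funext k i; rw [gcoef, dirCoef, cos_sub_pi_div_two]
  rw [← hcoef]
  rfl

lemma abs_sin_sub_le (u v : ℝ) : |sin (u - v)| ≤ |cos u| + |cos v| := by
  calc |sin (u - v)| ≤ |sin u * cos v| + |cos u * sin v| := by
        rw [sin_sub]; exact abs_sub _ _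
    _ ≤ 1 * |cos v| + |cos u| * 1 := by
        rw [abs_mul, abs_mul]
        gcongr <;> exact abs_sin_le_one _
    _ = |cos u| + |cos v| := by ring

lemma dragonAngle_children (α : ℝ) (k i : ℕ) : ∃ β, (β = α ∨ β = -α) ∧
    dragonAngle α (k + 1) (2 * i) = dragonAngle α k i + β ∧
    dragonAngle α (k + 1) (2 * i + 1) = dragonAngle α k i - β := by
  have hhalf : (2 * i + 1) / 2 = i := by omega
  have hodd : (2 * i + 1) % 2 = 1 := by omega
  simp only [dragonAngle, Nat.mul_div_cancel_left i two_pos, Nat.mul_mod_right, hhalf, hodd]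
  rcases Nat.mod_two_eq_zero_or_one i with hi | hi
  · exact ⟨α, by simp [hi, sub_eq_add_neg]⟩
  · exact ⟨-α, by simp [hi]⟩

lemma isDyadicAdditive_dirCoef {α : ℝ} (hα : cos α ≠ 0) (φ : ℝ) :
    IsDyadicAdditive (dirCoef α φ) := by
  intro k i
  obtain ⟨β, hβ, hleft, hright⟩ := dragonAngle_children α k i
  have hcos : cos β = cos α := by
    rcases hβ with rfl | rfl
    exacts [rfl, cos_neg α]
  have hsum : cos (dragonAngle α k i + β - φ) + cos (dragonAngle α k i - β - φ) =
      cos (dragonAngle α k i - φ) * (2 * cos α) := by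
    rw [add_sub_right_comm, sub_right_comm, cos_add _ β, cos_sub _ β, hcos]
    ring
  rw [dirCoef, dirCoef, dirCoef, hleft, hright, ← add_div, hsum, pow_succ,
    mul_div_mul_right _ _ (mul_ne_zero two_ne_zero hα)]

lemma abs_dirCoef {α : ℝ} (hα : 0 ≤ cos α) (φ : ℝ) (k i : ℕ) :
    |dirCoef α φ k i| = |cos (dragonAngle α k i - φ)| * (2 * cos α)⁻¹ ^ k := by
  rw [dirCoef, abs_div, abs_of_nonneg (by positivity : 0 ≤ (2 * cos α) ^ k), inv_pow,
    div_eq_mul_inv]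

lemma abs_dirCoef_le {α : ℝ} (hα : 0 ≤ cos α) (φ : ℝ) (k i : ℕ) :
    |dirCoef α φ k i| ≤ (2 * cos α)⁻¹ ^ k := by
  rw [abs_dirCoef hα]
  exact mul_le_of_le_one_left (by positivity) (abs_cos_le_one _)

lemma le_abs_dirCoef_add_abs_dirCoef {α : ℝ} (hα : 0 ≤ cos α) (φ : ℝ) (k i : ℕ) :
    |sin (2 * α)| * (2 * cos α)⁻¹ ^ (k + 1) ≤
      |dirCoef α φ (k + 1) (2 * i)| + |dirCoef α φ (k + 1) (2 * i + 1)| := by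
  obtain ⟨β, hβ, hleft, hright⟩ := dragonAngle_children α k i
  have hsin : |sin (2 * α)| = |sin (2 * β)| := by
    rcases hβ with rfl | rfl
    · rfl
    · rw [mul_neg, sin_neg, abs_neg]
  have hangle : 2 * β = dragonAngle α k i + β - φ - (dragonAngle α k i - β - φ) := by ring
  rw [abs_dirCoef hα, abs_dirCoef hα, ← add_mul, hleft, hright, hsin, hangle]
  gcongr
  exact abs_sin_sub_le _ _

lemma half_lt_cos_of_lt_pi_div_three {α : ℝ} (hα : 0 ≤ α) (hα3 : α < π / 3) : 1 / 2 < cos α := by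
  rw [← cos_pi_div_three]
  exact cos_lt_cos_of_nonneg_of_le_pi hα (by linarith [pi_pos]) hα3

lemma cos_lt_one_of_pos_of_le_pi {α : ℝ} (hα : 0 < α) (hαπ : α ≤ π) : cos α < 1 := by
  simpa only [cos_zero] using cos_lt_cos_of_nonneg_of_le_pi le_rfl hαπ hα

theorem stmt17_general {α : ℝ} (hα : 1 / 2 < cos α) (hα1 : cos α < 1) (φ : ℝ) {z : ℝ → ℝ}
    (hz : ∀ t ∈ Set.Icc (0 : ℝ) 1,
      Tendsto (fun k => dyadicApprox (dirCoef α φ) k t) atTop (𝓝 (z t))) :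
    HasBoxDim (unitGraph z) (1 - log (cos α) / log 2) := by
  have hcos : 0 < cos α := by linarith
  have hsin : sin α ≠ 0 := fun h => by nlinarith [sin_sq_add_cos_sq α]
  have hsin_two : 0 < |sin (2 * α)| := by
    rw [sin_two_mul]; positivity
  have hratio : 1 / 2 < (2 * cos α)⁻¹ := by
    rw [one_div, inv_lt_inv₀ two_pos (by positivity)]; linarith
  have hratio1 : (2 * cos α)⁻¹ < 1 := inv_lt_one_of_one_lt₀ (by linarith)
  have hdim : log (4 * (2 * cos α)⁻¹) / log 2 = 1 - log (cos α) / log 2 := by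
    have hfour : 4 * (2 * cos α)⁻¹ = 2 / cos α := by field_simp; norm_num
    rw [hfour, log_div two_ne_zero hcos.ne', sub_div, div_self (log_pos one_lt_two).ne']
  rw [← hdim]
  exact (isDyadicAdditive_dirCoef hcos.ne' φ).hasBoxDim_unitGraph hratio hratio1 hsin_two
    (abs_dirCoef_le hcos.le φ) (le_abs_dirCoef_add_abs_dirCoef hcos.le φ) hz

end Dragon

theorem stmt17 (θ : ℝ) (hθ0 : π / 3 < θ) (hθ1 : θ < π)
    (xθ yθ : ℝ → ℝ)
    (hx : TendstoUniformlyOn (fun k => xfun ((π - θ) / 2) k) xθ Filter.atTop (Set.Icc (0 : ℝ) 1))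
    (hy : TendstoUniformlyOn (fun k => yfun ((π - θ) / 2) k) yθ Filter.atTop (Set.Icc (0 : ℝ) 1)) :
    Filter.Tendsto
        (fun δ : ℝ =>
          Real.log (meshCountδ {p : ℝ × ℝ | p.1 ∈ Set.Icc (0 : ℝ) 1 ∧ p.2 = xθ p.1} δ) /
            (-Real.log δ))
        (nhdsWithin 0 (Set.Ioi 0))
        (nhds (1 - Real.log (Real.cos ((π - θ) / 2)) / Real.log 2)) ∧
    Filter.Tendsto
        (fun δ : ℝ =>
          Real.log (meshCountδ {p : ℝ × ℝ | p.1 ∈ Set.Icc (0 : ℝ) 1 ∧ p.2 = yθ p.1} δ) /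
            (-Real.log δ))
        (nhdsWithin 0 (Set.Ioi 0))
        (nhds (1 - Real.log (Real.cos ((π - θ) / 2)) / Real.log 2)) := by
  have hlower : 1 / 2 < cos ((π - θ) / 2) :=
    half_lt_cos_of_lt_pi_div_three (by linarith) (by linarith)
  have hupper : cos ((π - θ) / 2) < 1 := cos_lt_one_of_pos_of_le_pi (by linarith) (by linarith)
  simp only [xfun_eq_dyadicApprox] at hx
  simp only [yfun_eq_dyadicApprox] at hy
  exact ⟨stmt17_general hlower hupper 0 fun _ ht => hx.tendsto_at ht,
    stmt17_general hlower hupper (π / 2) fun _ ht => hy.tendsto_at ht⟩
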